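/- Let (X,d) be a compact metric space in which any two points can be joined by an L-Lipschitz path γ : [0,1] → X for some uniform constant L > 0. Let G_1 = {g_1,…,g_m} be a finite set of continuous self-maps of X such that each g_i is a surjective open map and there are common constants δ_0 > 0 and 0 < λ < 1 with d(g_i(x), g_i(y)) ≥ λ^{-1} d(x,y) whenever d(x,y) ≤ δ_0 (distance-expanding maps). Then the generated semigroup action satisfies the strong orbital specification property. -/

import Mathlib

/-!
Expanding open maps have contracting inverse branches on balls of a uniform radius `ρ`
(`exists_uniform_branch`: compactness makes openness uniform, and expansion turns it into a
contraction by `lam`).  Composing branches, a point within `ρ` of `g_w x` has a `g_w`-preimage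
that shadows the orbit of `x` along `w` and is `lam ^ |w|`-close to `x` (`exists_shadow`).
Lifting an `L`-Lipschitz path from `g_h x` to an arbitrary target in steps shorter than `ρ` then
shows that every point has a `g_h`-preimage within `L * lam ^ |h|` of `x` (`exists_lift`), so long
words map every `η`-ball onto `X`; take `η = min ε ρ`.

The specification property follows by induction on the number of blocks: a point `y'` shadowing
all blocks but the first is pulled back through the first gap `h 0` to a point `η`-close to
`g_{w 0} (x 0)`, and then through `w 0` by contracting branches.  The pull-backs are exact, so no
error accumulates.
-/

open Filter MeasureTheory Topology
open scoped Classical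

/-- Composition of the generators along a word `w = [i_n, …, i_1]` (rightmost letter applied
first): `wcomp g w = g i_n ∘ … ∘ g i_1`.  The partial compositions `g_{w,ℓ}` are obtained as
`wcomp g s` for the suffixes `s <:+ w`. -/
def wcomp {m : ℕ} {X : Type*} (g : Fin m → X → X) : List (Fin m) → X → X
  | [] => id
  | i :: w => g i ∘ wcomp g w

/-- The concatenation `h_j ++ w_j ++ … ++ h_1 ++ w_1` of the first `j` blocks, so that
`wcomp g (precomp w h j) = g_{h_j} ∘ g_{w_j} ∘ … ∘ g_{h_1} ∘ g_{w_1}`. -/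
def precomp {m : ℕ} (w h : ℕ → List (Fin m)) : ℕ → List (Fin m)
  | 0 => []
  | j + 1 => h j ++ w j ++ precomp w h j

/-- Strong orbital specification property for the semigroup action generated by
`g 0, …, g (m-1)`. -/
def StrongOrbitalSpec {m : ℕ} {X : Type*} [MetricSpace X] (g : Fin m → X → X) : Prop :=
  ∀ ε : ℝ, 0 < ε → ∃ p : ℕ, ∀ (k : ℕ) (x : ℕ → X) (w h : ℕ → List (Fin m)),
    (∀ j, j + 1 < k → p ≤ (h j).length) →
    ∃ y : X, ∀ j < k, ∀ s, s <:+ w j →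
      dist (wcomp g s (wcomp g (precomp w h j) y)) (wcomp g s (x j)) < ε

theorem wcomp_append {m : ℕ} {X : Type*} (g : Fin m → X → X) (u v : List (Fin m)) (x : X) :
    wcomp g (u ++ v) x = wcomp g u (wcomp g v x) := by
  induction u with
  | nil => rfl
  | cons i u ih => simp [wcomp, ih]

/-- The first block and gap, which are applied first, split off on the right. -/
theorem precomp_succ' {m : ℕ} (w h : ℕ → List (Fin m)) (j : ℕ) :
    precomp w h (j + 1) =
      precomp (fun n => w (n + 1)) (fun n => h (n + 1)) j ++ (h 0 ++ w 0) := by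
  induction j with
  | zero => simp [precomp]
  | succ j ih =>
    rw [precomp, ih, precomp]
    simp only [List.append_assoc]

/-- A continuous open map on a compact metric space is uniformly open. -/
theorem exists_uniform_open {X : Type*} [MetricSpace X] [CompactSpace X] (f : X → X)
    (hf : Continuous f) (ho : IsOpenMap f) {r : ℝ} (hr : 0 < r) :
    ∃ ρ > 0, ∀ x y : X, dist (f x) y < ρ → ∃ z, f z = y ∧ dist x z < r := by
  have key : ∃ ρ > 0, ∀ x ∈ (Set.univ : Set X), ∀ y : X, dist (f x) y < ρ →
      ∃ z, f z = y ∧ dist x z < r := by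
    refine isCompact_univ.induction_on
      (p := fun S => ∃ ρ > 0, ∀ x ∈ S, ∀ y : X, dist (f x) y < ρ → ∃ z, f z = y ∧ dist x z < r)
      ?_ ?_ ?_ ?_
    · exact ⟨1, one_pos, by simp⟩
    · rintro S T hST ⟨ρ, hρ, H⟩
      exact ⟨ρ, hρ, fun x hx => H x (hST hx)⟩
    · rintro S T ⟨ρ, hρ, H⟩ ⟨ρ', hρ', H'⟩
      refine ⟨min ρ ρ', lt_min hρ hρ', ?_⟩
      rintro x (hx | hx) y hy
      · exact H x hx y (hy.trans_le (min_le_left _ _))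
      · exact H' x hx y (hy.trans_le (min_le_right _ _))
    · intro a _
      obtain ⟨σ, hσ, hsub⟩ := Metric.isOpen_iff.1 (ho _ (Metric.isOpen_ball (x := a) (ε := r / 2)))
        (f a) ⟨a, Metric.mem_ball_self (half_pos hr), rfl⟩
      refine ⟨Metric.ball a (r / 2) ∩ f ⁻¹' Metric.ball (f a) (σ / 2),
        mem_nhdsWithin_of_mem_nhds (Filter.inter_mem (Metric.ball_mem_nhds _ (half_pos hr))
          (hf.continuousAt.preimage_mem_nhds (Metric.ball_mem_nhds _ (half_pos hσ)))),
        σ / 2, half_pos hσ, ?_⟩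
      rintro x ⟨hx1, hx2⟩ y hy
      have hx3 : dist (f x) (f a) < σ / 2 := hx2
      have hyb : y ∈ Metric.ball (f a) σ := by
        have := dist_triangle_left y (f a) (f x)
        rw [Metric.mem_ball]
        linarith
      obtain ⟨z, hz, rfl⟩ := hsub hyb
      refine ⟨z, rfl, ?_⟩
      have := dist_triangle_right x z a
      rw [Metric.mem_ball] at hx1 hz
      linarith
  obtain ⟨ρ, hρ, H⟩ := key
  exact ⟨ρ, hρ, fun x => H x (Set.mem_univ x)⟩

/-- Inverse branches of all the generators exist on balls of a common radius and contract
by `lam`. -/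
theorem exists_uniform_branch {X : Type*} [MetricSpace X] [CompactSpace X]
    {m : ℕ} (g : Fin m → X → X) (hg : ∀ i, Continuous (g i))
    (hopen : ∀ i, IsOpenMap (g i))
    (δ₀ lam : ℝ) (hδ₀ : 0 < δ₀) (hlam0 : 0 < lam)
    (hexp : ∀ i, ∀ x y : X, dist x y ≤ δ₀ → lam⁻¹ * dist x y ≤ dist (g i x) (g i y)) :
    ∃ ρ > 0, ∀ i, ∀ x y : X, dist (g i x) y < ρ →
      ∃ z, g i z = y ∧ dist x z ≤ lam * dist (g i x) y := by
  choose R hR HR using fun i => exists_uniform_open (g i) (hg i) (hopen i) hδ₀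
  obtain ⟨ρ, hρ, hle⟩ : ∃ ρ > 0, ∀ i, ρ ≤ R i := by
    cases isEmpty_or_nonempty (Fin m) with
    | inl _ => exact ⟨1, one_pos, isEmptyElim⟩
    | inr _ =>
      obtain ⟨i₀, hi₀⟩ := Finite.exists_min R
      exact ⟨R i₀, hR i₀, hi₀⟩
  refine ⟨ρ, hρ, fun i x y hxy => ?_⟩
  obtain ⟨z, rfl, hz⟩ := HR i x y (hxy.trans_le (hle i))
  exact ⟨z, rfl, (inv_mul_le_iff₀ hlam0).1 (hexp i x z hz.le)⟩

/-- Composite inverse branches along a word: the preimage `z` shadows the whole orbit of `x`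
along `w`, and `dist x z` is at most `lam ^ |w|` times the distance at the end of the word. -/
theorem exists_shadow {X : Type*} [MetricSpace X] {m : ℕ} (g : Fin m → X → X)
    (lam ρ : ℝ) (hlam0 : 0 < lam) (hlam1 : lam < 1)
    (hbr : ∀ i, ∀ x y : X, dist (g i x) y < ρ →
      ∃ z, g i z = y ∧ dist x z ≤ lam * dist (g i x) y)
    (w : List (Fin m)) (x y : X) (hxy : dist (wcomp g w x) y < ρ) :
    ∃ z, wcomp g w z = y ∧ dist x z ≤ lam ^ w.length * dist (wcomp g w x) y ∧
      ∀ s, s <:+ w → dist (wcomp g s x) (wcomp g s z) ≤ dist (wcomp g w x) y := by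
  induction w generalizing y with
  | nil =>
    refine ⟨y, rfl, by simp [wcomp], ?_⟩
    intro s hs
    rw [List.suffix_nil.1 hs]
    exact le_rfl
  | cons i w ih =>
    obtain ⟨u, hu, hd⟩ := hbr i (wcomp g w x) y hxy
    have hle : lam * dist (wcomp g (i :: w) x) y ≤ dist (wcomp g (i :: w) x) y :=
      mul_le_of_le_one_left dist_nonneg hlam1.le
    have hd' : dist (wcomp g w x) u ≤ lam * dist (wcomp g (i :: w) x) y := hd
    obtain ⟨z, hz, hc, hs⟩ := ih u ((hd'.trans hle).trans_lt hxy)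
    have hzy : wcomp g (i :: w) z = y := by
      rw [← hu, ← hz]
      rfl
    refine ⟨z, hzy, ?_, ?_⟩
    · calc dist x z ≤ lam ^ w.length * dist (wcomp g w x) u := hc
        _ ≤ lam ^ w.length * (lam * dist (wcomp g (i :: w) x) y) := by gcongr
        _ = _ := by rw [List.length_cons, pow_succ, mul_assoc]
    · intro s hsw
      rcases List.suffix_cons_iff.1 hsw with rfl | hsw
      · rw [hzy]
      · exact (hs s hsw).trans (hd'.trans hle)

/-- Lifting of an `L`-Lipschitz path through a map `F` that has inverse branches contracting
by `c` on balls of radius `ρ`. -/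
theorem exists_lift {X : Type*} [MetricSpace X] (L : ℝ) (hL : 0 < L)
    (hpath : ∀ x y : X, ∃ γ : ℝ → X, LipschitzOnWith (Real.toNNReal L) γ (Set.Icc 0 1) ∧
      γ 0 = x ∧ γ 1 = y)
    (F : X → X) (c ρ : ℝ) (hc : 0 ≤ c) (hρ : 0 < ρ)
    (hF : ∀ x y : X, dist (F x) y < ρ → ∃ z, F z = y ∧ dist x z ≤ c * dist (F x) y)
    (x y : X) : ∃ z, F z = y ∧ dist x z ≤ c * L := by
  obtain ⟨γ, hγ, h0, h1⟩ := hpath (F x) y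
  obtain ⟨N, hN⟩ := exists_nat_gt (L / ρ)
  have hNpos : (0 : ℝ) < N := (div_pos hL hρ).trans hN
  have hstep : L / N < ρ := by
    rw [div_lt_iff₀ hρ] at hN
    rw [div_lt_iff₀ hNpos]
    linarith
  have key : ∀ n : ℕ, n ≤ N → ∃ z, F z = γ (n / N) ∧ dist x z ≤ n * (c * (L / N)) := by
    intro n
    induction n with
    | zero => exact fun _ => ⟨x, by simp [h0], by simp⟩
    | succ n ih =>
      intro hn
      obtain ⟨u, hu, hd⟩ := ih (by omega)
      have hnR : ((n : ℝ) + 1) ≤ N := by exact_mod_cast hn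
      have hdist : dist (F u) (γ ((n + 1 : ℕ) / N)) ≤ L / N := by
        rw [hu]
        refine (hγ.dist_le_mul _ ⟨by positivity, ?_⟩ _ ⟨by positivity, ?_⟩).trans ?_
        · rw [div_le_one hNpos]
          linarith
        · rw [div_le_one hNpos]
          push_cast
          exact hnR
        · rw [Real.coe_toNNReal _ hL.le, Real.dist_eq]
          have : (n : ℝ) / N - ((n + 1 : ℕ) : ℝ) / N = -(1 / N) := by
            push_cast
            ring
          rw [this, abs_neg, abs_of_pos (by positivity)]
          exact le_of_eq (by ring)
      obtain ⟨v, hv, hdv⟩ := hF u _ (hdist.trans_lt hstep)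
      refine ⟨v, hv, ?_⟩
      have h2 : dist u v ≤ c * (L / N) := hdv.trans (by gcongr)
      have := dist_triangle x u v
      push_cast
      linarith
  obtain ⟨z, hz, hd⟩ := key N le_rfl
  refine ⟨z, ?_, hd.trans (le_of_eq ?_)⟩
  · rw [hz, div_self hNpos.ne', h1]
  · field_simp

/-- A semigroup generated by finitely many surjective, open,
distance-expanding maps of a compact metric space in which any two points are joined by an
`L`-Lipschitz path satisfies the strong orbital specification property. -/
theorem expanding_semigroup_strong_orbital_specification
    {X : Type*} [MetricSpace X] [CompactSpace X]
    (L : ℝ) (hL : 0 < L)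
    (hpath : ∀ x y : X, ∃ γ : ℝ → X, LipschitzOnWith (Real.toNNReal L) γ (Set.Icc 0 1) ∧
      γ 0 = x ∧ γ 1 = y)
    {m : ℕ} (g : Fin m → X → X) (hg : ∀ i, Continuous (g i))
    (hopen : ∀ i, IsOpenMap (g i)) (hsurj : ∀ i, Function.Surjective (g i))
    (δ₀ lam : ℝ) (hδ₀ : 0 < δ₀) (hlam0 : 0 < lam) (hlam1 : lam < 1)
    (hexp : ∀ i, ∀ x y : X, dist x y ≤ δ₀ → lam⁻¹ * dist x y ≤ dist (g i x) (g i y)) :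
    StrongOrbitalSpec g := by
  obtain ⟨ρ, hρ, hbr⟩ := exists_uniform_branch g hg hopen δ₀ lam hδ₀ hlam0 hexp
  have hsh := exists_shadow g lam ρ hlam0 hlam1 hbr
  intro ε hε
  have hη : 0 < min ε ρ := lt_min hε hρ
  obtain ⟨p, hp⟩ := exists_pow_lt_of_lt_one (div_pos hη hL) hlam1
  rw [lt_div_iff₀ hL] at hp
  refine ⟨p, fun k => ?_⟩
  induction k with
  | zero => exact fun x _ _ _ => ⟨x 0, by simp⟩
  | succ k ih =>
    intro x w h hlen
    rcases Nat.eq_zero_or_pos k with rfl | hk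
    · refine ⟨x 0, fun j hj s _ => ?_⟩
      obtain rfl : j = 0 := by omega
      simpa [precomp, wcomp] using hε
    obtain ⟨y', hy'⟩ := ih (fun n => x (n + 1)) (fun n => w (n + 1)) (fun n => h (n + 1))
      (fun j hj => hlen (j + 1) (by omega))
    obtain ⟨z, hz, hdz⟩ := exists_lift L hL hpath (wcomp g (h 0)) (lam ^ (h 0).length) ρ
      (by positivity) hρ
      (fun a b hab => let ⟨c, hc, hd, _⟩ := hsh (h 0) a b hab; ⟨c, hc, hd⟩)
      (wcomp g (w 0) (x 0)) y'
    have hdz' : dist (wcomp g (w 0) (x 0)) z < min ε ρ := by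
      refine (hdz.trans ?_).trans_lt hp
      exact mul_le_mul_of_nonneg_right
        (pow_le_pow_of_le_one hlam0.le hlam1.le (hlen 0 (by omega))) hL.le
    obtain ⟨y, hy, -, hys⟩ := hsh (w 0) (x 0) z (hdz'.trans_le (min_le_right _ _))
    refine ⟨y, fun j hj s hs => ?_⟩
    cases j with
    | zero =>
      rw [dist_comm]
      exact (hys s hs).trans_lt (hdz'.trans_le (min_le_left _ _))
    | succ j =>
      rw [precomp_succ', wcomp_append, wcomp_append, hy, hz]
      exact hy' j (by omega) s hs
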